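/- Let X be a second countable topological space and ≽ a total preorder on X such that for every x ∈ X both the upper contour set {y ∈ X : y ≽ x} and the lower contour set {y ∈ X : x ≽ y} are closed. Then there exists a continuous function u : X → ℝ with x ≽ y if and only if u(x) ≥ u(y). (The continuous addendum to Rader's theorem, classical case of the paper's Theorem.) -/

import Mathlib

/-!
The monotone form of Urysohn's lemma (Nachbin) separates any two points `a < b` by a continuous
monotone function `f` with `f a < f b`. The open sets `{(x, y) | f x < f y}` therefore cover the
graph of `<` in `X × X`, and by the Lindelöf property countably many functions suffice. A series in
these functions with positive coefficients is a continuous utility.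
-/

open Set

section NormallyPreordered

variable {X : Type*} [TopologicalSpace X] [Preorder X]

theorem monotone_urysohnsCU_approx {P : Set X → Set X → Prop}
    (hP : ∀ C U, P C U → IsLowerSet U) (c : Urysohns.CU P) (n : ℕ) : Monotone (c.approx n) := by
  induction n generalizing c with
  | zero =>
    intro x y hxy
    by_cases hy : y ∈ c.U
    · have hx : x ∈ c.U := hP _ _ c.P_C_U hxy hy
      simp [Urysohns.CU.approx, hx, hy]
    · exact (c.approx_le_one 0 x).trans_eq (c.approx_of_notMem_U 0 hy).symm
  | succ n ih => exact fun x y hxy => midpoint_le_midpoint (ih _ hxy) (ih _ hxy)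

theorem monotone_urysohnsCU_lim {P : Set X → Set X → Prop}
    (hP : ∀ C U, P C U → IsLowerSet U) (c : Urysohns.CU P) : Monotone c.lim :=
  fun _ y hxy => ciSup_mono (c.bddAbove_range_approx y)
    fun n => monotone_urysohnsCU_approx hP c n hxy

variable (X) in
/-- Nachbin's normally preordered spaces, the order analogue of normal spaces, on which continuous
monotone functions are constructed as in Urysohn's lemma. `Uᶜ` and `Dᶜ` are the closed and open
upper sets of the usual formulation by disjoint sets. -/
class NormallyPreorderedSpace : Prop where
  exists_between : ∀ {C U : Set X}, IsClosed C → IsLowerSet C → IsOpen U → IsLowerSet U → C ⊆ U →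
    ∃ V D, IsOpen V ∧ IsLowerSet V ∧ IsClosed D ∧ IsLowerSet D ∧ C ⊆ V ∧ V ⊆ D ∧ D ⊆ U

theorem exists_continuous_monotone_zero_one [NormallyPreorderedSpace X] {C U : Set X}
    (hC : IsClosed C) (hC_lower : IsLowerSet C) (hU : IsOpen U) (hU_lower : IsLowerSet U)
    (hCU : C ⊆ U) : ∃ f : X → ℝ, Continuous f ∧ Monotone f ∧ EqOn f 0 C ∧ EqOn f 1 Uᶜ := by
  -- The construction continues with `closure V` in place of `C`, and the closure of a lower set
  -- need not be a lower set; a closed lower set between `C` and `U` is enough.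
  let P : Set X → Set X → Prop := fun C U =>
    IsLowerSet U ∧ ∃ D, IsClosed D ∧ IsLowerSet D ∧ C ⊆ D ∧ D ⊆ U
  let c : Urysohns.CU P :=
    { C := C
      U := U
      P_C_U := ⟨hU_lower, C, hC, hC_lower, subset_rfl, hCU⟩
      closed_C := hC
      open_U := hU
      subset := hCU
      hP := by
        rintro C U - ⟨hU_lower, D, hD, hD_lower, hCD, hDU⟩ hU -
        obtain ⟨V, E, hV, hV_lower, hE, hE_lower, hDV, hVE, hEU⟩ :=
          NormallyPreorderedSpace.exists_between hD hD_lower hU hU_lower hDU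
        have hclosure : closure V ⊆ E := closure_minimal hVE hE
        exact ⟨V, hV, hCD.trans hDV, hclosure.trans hEU, ⟨hV_lower, D, hD, hD_lower, hCD, hDV⟩,
          hU_lower, E, hE, hE_lower, hclosure, hEU⟩ }
  exact ⟨c.lim, c.continuous_lim, monotone_urysohnsCU_lim (fun _ _ h => h.1) c,
    fun x hx => c.lim_of_mem_C x hx, fun x hx => c.lim_of_notMem_U x hx⟩

end NormallyPreordered

section TotalPreorder

variable {X : Type*} [TopologicalSpace X] [Preorder X] [@Std.Total X (· ≤ ·)] [ClosedIciTopology X]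

theorem isOpen_Iio_of_total (a : X) : IsOpen (Iio a) := by
  have h : Iio a = (Ici a)ᶜ := ext fun _ => Std.not_le.symm
  exact h ▸ isClosed_Ici.isOpen_compl

variable [ClosedIicTopology X]

instance : NormallyPreorderedSpace X where
  exists_between {C U} hC hC_lower hU hU_lower hCU := by
    by_cases hUC : U ⊆ C
    · obtain rfl := hCU.antisymm hUC
      exact ⟨C, C, hU, hU_lower, hC, hC_lower, subset_rfl, subset_rfl, subset_rfl⟩
    · obtain ⟨x, hxU, hxC⟩ := not_subset.1 hUC
      have hCx : C ⊆ Iio x := fun y hy => Std.not_le.1 fun hxy => hxC (hC_lower hxy hy)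
      exact ⟨Iio x, Iic x, isOpen_Iio_of_total x, isLowerSet_Iio x, isClosed_Iic, isLowerSet_Iic x,
        hCx, Iio_subset_Iic_self, hU_lower.Iic_subset hxU⟩

theorem exists_continuous_monotone_lt_of_lt {a b : X} (hab : a < b) :
    ∃ f : X → ℝ, Continuous f ∧ Monotone f ∧ f a < f b := by
  obtain ⟨f, hf, hf_mono, hf_zero, hf_one⟩ := exists_continuous_monotone_zero_one
    isClosed_Iic (isLowerSet_Iic a) (isOpen_Iio_of_total b) (isLowerSet_Iio b)
    (Iic_subset_Iio.2 hab)
  refine ⟨f, hf, hf_mono, ?_⟩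
  rw [hf_zero self_mem_Iic, hf_one self_notMem_Iio]
  exact zero_lt_one

end TotalPreorder

section Utility

variable {X : Type*} [TopologicalSpace X] [Preorder X]

theorem exists_continuous_monotone_forall_lt_of_exists_lt {ι : Type*} [Countable ι]
    {f : ι → X → ℝ} (hf : ∀ i, Continuous (f i)) (hf_mono : ∀ i, Monotone (f i)) :
    ∃ u : X → ℝ, Continuous u ∧ Monotone u ∧ ∀ x y, x ≤ y → (∃ i, f i x < f i y) → u x < u y := by
  obtain ⟨w, hw_pos, _, hw_sum, -⟩ := NNReal.exists_pos_sum_of_countable one_ne_zero ι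
  have hw : Summable fun i => (w i : ℝ) := NNReal.summable_coe.2 hw_sum.summable
  have hbound i x : ‖w i * Real.sigmoid (f i x)‖ ≤ w i := by
    rw [Real.norm_of_nonneg (mul_nonneg (w i).coe_nonneg (Real.sigmoid_nonneg _))]
    exact mul_le_of_le_one_right (w i).coe_nonneg (Real.sigmoid_le_one _)
  have hsum x : Summable fun i => w i * Real.sigmoid (f i x) :=
    hw.of_norm_bounded fun i => hbound i x
  have hle {x y : X} (hxy : x ≤ y) i : w i * Real.sigmoid (f i x) ≤ w i * Real.sigmoid (f i y) :=
    mul_le_mul_of_nonneg_left (Real.sigmoid_le (hf_mono i hxy)) (w i).coe_nonneg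
  refine ⟨fun x => ∑' i, w i * Real.sigmoid (f i x), ?_, ?_, ?_⟩
  · exact continuous_tsum
      (fun i => continuous_const.mul (continuous_sigmoid.comp (hf i))) hw hbound
  · exact fun x y hxy => (hsum x).tsum_le_tsum (hle hxy) (hsum y)
  · rintro x y hxy ⟨i, hi⟩
    exact (hsum x).tsum_lt_tsum (hle hxy)
      (mul_lt_mul_of_pos_left (Real.sigmoid_lt hi) (hw_pos i)) (hsum y)

theorem exists_continuous_monotone_strictMono_of_isLindelof
    (hX : IsLindelof {p : X × X | p.1 < p.2})
    (hsep : ∀ x y : X, x < y → ∃ f : X → ℝ, Continuous f ∧ Monotone f ∧ f x < f y) :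
    ∃ u : X → ℝ, Continuous u ∧ Monotone u ∧ StrictMono u := by
  let F := {f : X → ℝ // Continuous f ∧ Monotone f}
  obtain ⟨T, hT, hT_cover⟩ := hX.elim_countable_subcover
    (fun f : F => {p : X × X | f.1 p.1 < f.1 p.2})
    (fun f => isOpen_lt (f.2.1.comp continuous_fst) (f.2.1.comp continuous_snd))
    (fun p hp => by
      obtain ⟨f, hf, hf_mono, hlt⟩ := hsep p.1 p.2 hp
      exact mem_iUnion.2 ⟨⟨f, hf, hf_mono⟩, hlt⟩)
  have : Countable T := hT.to_subtype
  obtain ⟨u, hu, hu_mono, hu_lt⟩ := exists_continuous_monotone_forall_lt_of_exists_lt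
    (f := fun f : T => f.1.1) (fun f => f.1.2.1) (fun f => f.1.2.2)
  refine ⟨u, hu, hu_mono, fun x y hxy => hu_lt x y hxy.le ?_⟩
  have hmem : (x, y) ∈ {p : X × X | p.1 < p.2} := hxy
  obtain ⟨f, hfT, hlt⟩ := mem_iUnion₂.1 (hT_cover hmem)
  exact ⟨⟨f, hfT⟩, hlt⟩

end Utility

theorem rader_continuous_representation_general
    {X : Type*} [TopologicalSpace X]
    (R : X → X → Prop)
    (htrans : ∀ x y z, R x y → R y z → R x z)
    (htotal : ∀ x y, R x y ∨ R y x)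
    (husc : ∀ x, IsClosed {y | R y x})
    (hlsc : ∀ x, IsClosed {y | R x y})
    (hlind : IsLindelof {p : X × X | ¬ R p.1 p.2}) :
    ∃ u : X → ℝ, Continuous u ∧ ∀ x y, R x y ↔ u y ≤ u x := by
  let _ : Preorder X :=
    { le := fun x y => R y x
      le_refl := fun x => or_self_iff.1 (htotal x x)
      le_trans := fun x y z hxy hyz => htrans z y x hyz hxy }
  have : @Std.Total X (· ≤ ·) := ⟨fun x y => htotal y x⟩
  have : ClosedIciTopology X := ⟨husc⟩
  have : ClosedIicTopology X := ⟨hlsc⟩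
  have hlt : {p : X × X | p.1 < p.2} = {p | ¬ R p.1 p.2} :=
    ext fun p => (Std.not_le (a := p.2) (b := p.1)).symm
  obtain ⟨u, hu, hu_mono, hu_strict⟩ := exists_continuous_monotone_strictMono_of_isLindelof
    (hlt ▸ hlind) fun _ _ => exists_continuous_monotone_lt_of_lt
  refine ⟨u, hu, fun x y => ⟨fun h => hu_mono h, fun h => ?_⟩⟩
  by_contra hxy
  exact (hu_strict (Std.not_le.1 hxy)).not_ge h

/-- Continuous Rader/Debreu theorem: a continuous total preorder on a second
countable topological space admits a continuous utility representation. -/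
theorem rader_continuous_representation
    {X : Type*} [TopologicalSpace X] [SecondCountableTopology X]
    (R : X → X → Prop)
    (hrefl : ∀ x, R x x)
    (htrans : ∀ x y z, R x y → R y z → R x z)
    (htotal : ∀ x y, R x y ∨ R y x)
    (husc : ∀ x, IsClosed {y | R y x})
    (hlsc : ∀ x, IsClosed {y | R x y}) :
    ∃ u : X → ℝ, Continuous u ∧ ∀ x y, R x y ↔ u y ≤ u x :=
  rader_continuous_representation_general R htrans htotal husc hlsc
    (HereditarilyLindelofSpace.isLindelof _)
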